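/- For every integer i ≥ 2 and every N ≥ 2i, the following identity of unitaries on (ℂ²)^{⊗N} holds for some real phase φ: D_{2i} = e^{iφ} · H_{2i} · S†_{2i} · Ladder_CZ · H_{2i−1} · S_{2i−1} · H_{2i−1} · Ladder_CZ · D_{2i−1} · S†_{2i−1}, where the rightmost factor is applied first and G_k denotes the single-qubit gate G acting on qubit k. -/

import Mathlib

/-!
Write `a, b, c` for the (1-based) qubits `2i-1, 2i, 2i-2`. The phase is trivial.

Since `H S H = (1+i)/2 + (1-i)/2 X` and conjugation by the CZ ladder takes `X_a` to `Z_c X_a Z_b`,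
the middle block is `(1+i)/2 + (1-i)/2 Z_c X_a Z_b`. Moving it to the right through `D_{2i-1}`
absorbs `Z_c` into the factor `CZ_{c,a}` and turns `X_a` into `Z_a` at `H_a`, leaving
`(1+i)/2 + (1-i)/2 Z_a Z_b`. Together with `S†_a S†_b` this is exactly `CZ_{a,b}`, and
`D_{2i} = H_b D_{2i-1} CZ_{a,b}`.

The argument is carried out on matrix entries. The entry of `D_k` is a product of a CZ sign, a
Hadamard kernel and another CZ sign, and the commutations above become transformation rules of these
scalars under flipping the bit at `a` (`ladderSign_flip`, `czSign_flip`, `hadKer_flip`).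
-/


open Complex

noncomputable section

/-- Basis states of `N` qubits: bit strings of length `N` (qubit `k` (1-based) ↦ index `k-1`). -/
abbrev QState (N : ℕ) := Fin N → ZMod 2

/-- Operators on `(ℂ²)^{⊗N}`, as matrices in the computational basis. -/
abbrev QOp (N : ℕ) := Matrix (QState N) (QState N) ℂ

/-- Ry(θ) = [[cos(θ/2), −sin(θ/2)], [sin(θ/2), cos(θ/2)]]. -/
def RyM (θ : ℝ) : Matrix (ZMod 2) (ZMod 2) ℂ :=
  Matrix.of fun a b =>
    if a = 0 then (if b = 0 then ((Real.cos (θ/2) : ℝ) : ℂ) else -((Real.sin (θ/2) : ℝ) : ℂ))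
    else (if b = 0 then ((Real.sin (θ/2) : ℝ) : ℂ) else ((Real.cos (θ/2) : ℝ) : ℂ))

/-- Rz(θ) = diag(e^{−iθ/2}, e^{iθ/2}). -/
def RzM (θ : ℝ) : Matrix (ZMod 2) (ZMod 2) ℂ :=
  Matrix.of fun a b =>
    if a = b then
      (if a = 0 then Complex.exp (-(θ/2 : ℝ) * Complex.I) else Complex.exp ((θ/2 : ℝ) * Complex.I))
    else 0

/-- Hadamard gate. -/
def HM : Matrix (ZMod 2) (ZMod 2) ℂ :=
  Matrix.of fun a b => (1 / ((Real.sqrt 2 : ℝ) : ℂ)) * (if a = 1 ∧ b = 1 then -1 else 1)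

/-- T gate = diag(1, e^{iπ/4}). -/
def TM : Matrix (ZMod 2) (ZMod 2) ℂ :=
  Matrix.of fun a b =>
    if a = b then (if a = 0 then 1 else Complex.exp ((Real.pi/4 : ℝ) * Complex.I)) else 0

/-- S gate = diag(1, i). -/
def SM : Matrix (ZMod 2) (ZMod 2) ℂ :=
  Matrix.of fun a b => if a = b then (if a = 0 then 1 else Complex.I) else 0

/-- S† gate = diag(1, −i). -/
def SdgM : Matrix (ZMod 2) (ZMod 2) ℂ :=
  Matrix.of fun a b => if a = b then (if a = 0 then 1 else -Complex.I) else 0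

/-- Pauli X gate. -/
def XM : Matrix (ZMod 2) (ZMod 2) ℂ :=
  Matrix.of fun a b => if a = b then 0 else 1

/-- A single-qubit gate `g` acting on qubit with 0-based index `k`, identity elsewhere. -/
def gate1 {N : ℕ} (g : Matrix (ZMod 2) (ZMod 2) ℂ) (k : Fin N) : QOp N :=
  Matrix.of fun x y => if ∀ j, j ≠ k → x j = y j then g (x k) (y k) else 0

/-- CZ gate on (0-based) qubits `k`, `l`. -/
def CZg {N : ℕ} (k l : Fin N) : QOp N :=
  Matrix.of fun x y => if x = y then (if x k = 1 ∧ x l = 1 then (-1 : ℂ) else 1) else 0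

/-- CNOT gate with control `c` and target `t` (0-based): |y⟩ ↦ |y with bit t replaced by y t + y c⟩. -/
def CNOTg {N : ℕ} (c t : Fin N) : QOp N :=
  Matrix.of fun x y => if x = Function.update y t (y t + y c) then (1 : ℂ) else 0

/-- The `k`-th bit (0-based) of a basis state, `0` when out of range. -/
def bitAt {N : ℕ} (x : QState N) (k : ℕ) : ZMod 2 :=
  if h : k < N then x ⟨k, h⟩ else 0

/-- Ladder of CZ gates: `∏_{k=1}^{N−1} CZ_{k,k+1}` (all factors commute, so it is
the diagonal matrix with entry `(−1)^{#{adjacent 11 pairs}}`). -/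
def ladderCZ (N : ℕ) : QOp N :=
  Matrix.of fun x y =>
    if x = y then
      ∏ k ∈ Finset.range (N - 1), (if bitAt x k = 1 ∧ bitAt x (k + 1) = 1 then (-1 : ℂ) else 1)
    else 0

/-- First CNOT layer of the ladder: simultaneous CNOT_{k+1,k} for 1-based `k ∈ {1,…,N−1}`,
`k ≢ N (mod 2)` (control qubit `k+1`, target qubit `k`; disjoint pairs). -/
def layer1Map (N : ℕ) (y : QState N) : QState N :=
  fun i => if (i : ℕ) + 1 < N ∧ ((i : ℕ) + 1) % 2 ≠ N % 2 then y i + bitAt y ((i : ℕ) + 1) else y i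

/-- Second CNOT layer of the ladder: simultaneous CNOT_{k+1,k} for 1-based `k ∈ {1,…,N−1}`,
`k ≡ N (mod 2)`. -/
def layer2Map (N : ℕ) (y : QState N) : QState N :=
  fun i => if (i : ℕ) + 1 < N ∧ ((i : ℕ) + 1) % 2 = N % 2 then y i + bitAt y ((i : ℕ) + 1) else y i

/-- Ladder of CNOT gates: `L₂ · L₁` with `L₁` applied first. It is a permutation
matrix of the composed bit-string map. -/
def ladderCNOT (N : ℕ) : QOp N :=
  Matrix.of fun x y => if x = layer2Map N (layer1Map N y) then (1 : ℂ) else 0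

/-- Rotation layer `⊗_{k} Rz(β_k)·Ry(α_k)`. -/
def rotYZ {N : ℕ} (α β : Fin N → ℝ) : QOp N :=
  Matrix.of fun x y => ∏ k : Fin N, (RzM (β k) * RyM (α k)) (x k) (y k)

/-- The Ry-Rz-CZ ansatz of depth `M`:
`R_M · Ladder_CZ · R_{M−1} ⋯ Ladder_CZ · R_0` (`R_0` applied first), with
rotation layer `i` using angles `α i`, `β i`. -/
def ansatzYZ (N : ℕ) (α β : ℕ → Fin N → ℝ) : ℕ → QOp N
  | 0 => rotYZ (α 0) (β 0)
  | (M + 1) => rotYZ (α (M + 1)) (β (M + 1)) * ladderCZ N * ansatzYZ N α β M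

/-- Rotation layer `⊗_{k} Ry(α_k)`. -/
def rotY {N : ℕ} (α : Fin N → ℝ) : QOp N :=
  Matrix.of fun x y => ∏ k : Fin N, RyM (α k) (x k) (y k)

/-- The Ry-CNOT ansatz of depth `M`:
`R_M · Ladder_CNOT · R_{M−1} ⋯ Ladder_CNOT · R_0` (`R_0` applied first). -/
def ansatzY (N : ℕ) (α : ℕ → Fin N → ℝ) : ℕ → QOp N
  | 0 => rotY (α 0)
  | (M + 1) => rotY (α (M + 1)) * ladderCNOT N * ansatzY N α M

/-- Product of CZ gates `CZ_{q,q+1}` (1-based qubits) over all `q` satisfying `P`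
(a diagonal matrix, since all CZ's commute). -/
def czLayer (N : ℕ) (P : ℕ → Prop) [DecidablePred P] : QOp N :=
  Matrix.of fun x y =>
    if x = y then
      ∏ p ∈ Finset.range N,
        (if P (p + 1) ∧ bitAt x p = 1 ∧ bitAt x (p + 1) = 1 then (-1 : ℂ) else 1)
    else 0

/-- Hadamard gates on all 1-based qubits `q` satisfying `P`, identity elsewhere. -/
def hadOn (N : ℕ) (P : ℕ → Prop) [DecidablePred P] : QOp N :=
  Matrix.of fun x y =>
    ∏ k : Fin N, (if P ((k : ℕ) + 1) then HM (x k) (y k) else if x k = y k then (1 : ℂ) else 0)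

/-- The circuit `D_k` (1-based qubits, rightmost factor applied first):
`D_{2i} = (∏_{j=1}^{i−1} CZ_{2j,2j+1}) · (∏_{q=2}^{2i} H_q) · (∏_{j=1}^{i} CZ_{2j−1,2j})`,
`D_{2i+1} = (∏_{j=1}^{i} CZ_{2j,2j+1}) · (∏_{q=2}^{2i+1} H_q) · (∏_{j=1}^{i} CZ_{2j−1,2j})`. -/
def Dgate (N k : ℕ) : QOp N :=
  czLayer N (fun p => p % 2 = 0 ∧ 2 ≤ p ∧ p ≤ k - 1) *
    hadOn N (fun q => 2 ≤ q ∧ q ≤ k) *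
    czLayer N (fun p => p % 2 = 1 ∧ p ≤ k - 1)

/-- `U ⊗ I`: the operator acting as `U` on qubits `1,…,N` and identity on `A` ancilla qubits. -/
def embed (N A : ℕ) (U : QOp N) : QOp (N + A) :=
  Matrix.of fun x y =>
    U (fun i => x (Fin.castAdd A i)) (fun i => y (Fin.castAdd A i)) *
      (if ∀ i : Fin A, x (Fin.natAdd N i) = y (Fin.natAdd N i) then (1 : ℂ) else 0)

end
/-! ### Bits and single-qubit gates -/

/-- The eigenvalue `(-1)^u` of the Pauli `Z` gate on the bit `u`. -/
def zSign (u : ZMod 2) : ℂ := if u = 1 then -1 else 1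

lemma zmod2_cases (u : ZMod 2) : u = 0 ∨ u = 1 := by
  revert u; decide

lemma sum_zmod2 (f : ZMod 2 → ℂ) (u : ZMod 2) : ∑ s, f s = f u + f (u + 1) := by
  have h : ∑ s, f s = f 0 + f 1 := Fin.sum_univ_two f
  have h2 : (1 + 1 : ZMod 2) = 0 := by decide
  rcases zmod2_cases u with rfl | rfl
  · simpa using h
  · rw [h, h2, add_comm]

lemma bitAt_update {N : ℕ} (x : QState N) (a : Fin N) (v : ZMod 2) (k : ℕ) :
    bitAt (Function.update x a v) k = if k = a then v else bitAt x k := by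
  unfold bitAt
  by_cases h : k < N
  · by_cases hk : k = a
    · subst hk; simp
    · have : (⟨k, h⟩ : Fin N) ≠ a := fun e => hk (by rw [← e])
      simp [h, hk, Function.update_of_ne this]
  · have : k ≠ a := fun e => h (e ▸ a.2)
    simp [h, this]

lemma bitAt_val {N : ℕ} (x : QState N) (a : Fin N) : bitAt x a = x a := by
  simp [bitAt]

lemma gate1_mul_apply {N : ℕ} (g : Matrix (ZMod 2) (ZMod 2) ℂ) (k : Fin N) (M : QOp N)
    (x y : QState N) :
    (gate1 g k * M) x y = ∑ s, g (x k) s * M (Function.update x k s) y := by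
  rw [Matrix.mul_apply]
  symm
  refine Finset.sum_of_injOn (fun s => Function.update x k s) ?_ ?_ ?_ ?_
  · intro s _ t _ h
    simpa using congrFun h k
  · intro s _
    simp
  · intro z _ hz
    have : ¬ ∀ j, j ≠ k → x j = z j := by
      intro h
      refine hz ⟨z k, by simp, ?_⟩
      funext j
      by_cases hj : j = k
      · subst hj; simp
      · simp [hj, h j hj]
    simp only [gate1, Matrix.of_apply, if_neg this, zero_mul]
  · intro s _
    have : ∀ j, j ≠ k → x j = Function.update x k s j := fun j hj => by simp [hj]
    simp only [gate1, Matrix.of_apply, if_pos this, Function.update_self]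

lemma gate1_mul_gate1 {N : ℕ} (g h : Matrix (ZMod 2) (ZMod 2) ℂ) (k : Fin N) :
    gate1 g k * gate1 h k = gate1 (g * h) k := by
  ext x y
  rw [gate1_mul_apply]
  have : ∀ s, (∀ j, j ≠ k → Function.update x k s j = y j) ↔ (∀ j, j ≠ k → x j = y j) :=
    fun s => forall₂_congr fun j hj => by rw [Function.update_of_ne hj]
  simp only [gate1, Matrix.of_apply, this, Function.update_self, Matrix.mul_apply]
  split_ifs <;> simp

lemma gate1_SdgM {N : ℕ} (k : Fin N) :
    gate1 SdgM k = Matrix.diagonal fun x : QState N => if x k = 0 then 1 else -I := by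
  ext x y
  simp only [gate1, SdgM, Matrix.of_apply, Matrix.diagonal_apply]
  by_cases h : x = y
  · subst h; simp
  · rw [if_neg h]
    split_ifs with h1 h2 <;> first | rfl | skip
    all_goals
      exact absurd (funext fun j => by
        by_cases hj : j = k
        · rw [hj, h2]
        · exact h1 j hj) h

/-- `H S H = (1+i)/2 + (1-i)/2 X`, applied on qubit `k` of an operator `M`. -/
lemma HSH_mul_apply {N : ℕ} (k : Fin N) (M : QOp N) (x y : QState N) :
    (gate1 HM k * (gate1 SM k * (gate1 HM k * M))) x y =
      (1 + I) / 2 * M x y + (1 - I) / 2 * M (Function.update x k (x k + 1)) y := by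
  have h2 : (((Real.sqrt 2 : ℝ) : ℂ))⁻¹ * (((Real.sqrt 2 : ℝ) : ℂ))⁻¹ = 1 / 2 := by
    rw [← mul_inv, ← Complex.ofReal_mul, Real.mul_self_sqrt (by norm_num)]; norm_num
  have e : ∀ u v, (HM * (SM * HM)) u v = if u = v then (1 + I) / 2 else (1 - I) / 2 := by
    intro u v
    rw [Matrix.mul_apply, sum_zmod2 _ 0, Matrix.mul_apply, Matrix.mul_apply, sum_zmod2 _ 0,
      sum_zmod2 _ 0]
    rcases zmod2_cases u with rfl | rfl <;> rcases zmod2_cases v with rfl | rfl <;>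
      simp [HM, SM] <;> first
        | linear_combination (1 + I) * h2
        | linear_combination (1 - I) * h2
  rw [← Matrix.mul_assoc (gate1 SM k), gate1_mul_gate1, ← Matrix.mul_assoc, gate1_mul_gate1,
    gate1_mul_apply, sum_zmod2 _ (x k)]
  simp [e]

/-! ### Diagonal layers and the Hadamard layer -/

/-- The diagonal entry of `ladderCZ N` at `x`. -/
def ladderSign {N : ℕ} (x : QState N) : ℂ :=
  ∏ k ∈ Finset.range (N - 1), (if bitAt x k = 1 ∧ bitAt x (k + 1) = 1 then (-1 : ℂ) else 1)

/-- The diagonal entry of `czLayer N P` at `x`. -/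
def czSign {N : ℕ} (P : ℕ → Prop) [DecidablePred P] (x : QState N) : ℂ :=
  ∏ p ∈ Finset.range N,
    (if P (p + 1) ∧ bitAt x p = 1 ∧ bitAt x (p + 1) = 1 then (-1 : ℂ) else 1)

lemma ladderCZ_eq (N : ℕ) : ladderCZ N = Matrix.diagonal ladderSign := by
  ext x y; simp [ladderCZ, ladderSign, Matrix.diagonal_apply]

lemma czLayer_eq (N : ℕ) (P : ℕ → Prop) [DecidablePred P] :
    czLayer N P = Matrix.diagonal (czSign P) := by
  ext x y; simp [czLayer, czSign, Matrix.diagonal_apply]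

lemma Dgate_apply (N k : ℕ) (x y : QState N) :
    Dgate N k x y = czSign (fun p => p % 2 = 0 ∧ 2 ≤ p ∧ p ≤ k - 1) x *
      hadOn N (fun q => 2 ≤ q ∧ q ≤ k) x y * czSign (fun p => p % 2 = 1 ∧ p ≤ k - 1) y := by
  rw [Dgate, czLayer_eq, czLayer_eq, Matrix.mul_diagonal, Matrix.diagonal_mul]

lemma ladderSign_mul_self {N : ℕ} (x : QState N) : ladderSign x * ladderSign x = 1 := by
  unfold ladderSign
  rw [← Finset.prod_mul_distrib]
  refine Finset.prod_eq_one fun k _ => ?_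
  split_ifs <;> norm_num

/-- Conjugating `X_a` by the CZ ladder produces `Z` on both neighbours of `a`. -/
lemma ladderSign_flip {N : ℕ} (x : QState N) (a b c : Fin N) (hab : (b : ℕ) = a + 1)
    (hca : (a : ℕ) = c + 1) :
    ladderSign x * ladderSign (Function.update x a (x a + 1)) = zSign (x c) * zSign (x b) := by
  unfold ladderSign
  rw [← Finset.prod_mul_distrib]
  have hb := b.2
  have key : ∀ k ∈ Finset.range (N - 1),
      ((if bitAt x k = 1 ∧ bitAt x (k + 1) = 1 then (-1 : ℂ) else 1) *
        (if bitAt (Function.update x a (x a + 1)) k = 1 ∧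
          bitAt (Function.update x a (x a + 1)) (k + 1) = 1 then (-1 : ℂ) else 1)) =
      (if k = (c : ℕ) then zSign (x c) else 1) * (if k = (a : ℕ) then zSign (x b) else 1) := by
    intro k _
    have h2 : (1 + 1 : ZMod 2) = 0 := by decide
    simp only [bitAt_update, ← bitAt_val x]
    by_cases h1 : k = c
    · subst h1
      have : (c : ℕ) ≠ a := by omega
      rcases zmod2_cases (bitAt x c) with e | e <;> rcases zmod2_cases (bitAt x a) with e' | e' <;>
        simp [this, ← hca, e, e', zSign, h2]
    · by_cases h3 : k = a
      · subst h3
        have : (b : ℕ) ≠ a := by omega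
        rcases zmod2_cases (bitAt x b) with e | e <;>
          rcases zmod2_cases (bitAt x a) with e' | e' <;>
          simp [h1, this, ← hab, e, e', zSign, h2]
      · have : k + 1 ≠ a := by omega
        simp only [h1, h3, this, if_false]
        split_ifs <;> norm_num
  rw [Finset.prod_congr rfl key, Finset.prod_mul_distrib, Finset.prod_ite_eq', Finset.prod_ite_eq',
    if_pos (Finset.mem_range.2 (by omega)), if_pos (Finset.mem_range.2 (by omega))]

/-- If the only CZ of a layer touching `a = c + 1` is `CZ_{c,a}`, flipping the bit at `a` multiplies
the sign of the layer by `Z_c`. -/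
lemma czSign_flip {N : ℕ} (P : ℕ → Prop) [DecidablePred P] (x : QState N) (a c : Fin N)
    (hca : (a : ℕ) = c + 1) (h1 : P (c + 1)) (h2 : ¬ P (a + 1)) :
    czSign P (Function.update x a (x a + 1)) = zSign (x c) * czSign P x := by
  unfold czSign
  have key : ∀ p ∈ Finset.range N,
      (if P (p + 1) ∧ bitAt (Function.update x a (x a + 1)) p = 1 ∧
          bitAt (Function.update x a (x a + 1)) (p + 1) = 1 then (-1 : ℂ) else 1) =
      (if p = (c : ℕ) then zSign (x c) else 1) *
        (if P (p + 1) ∧ bitAt x p = 1 ∧ bitAt x (p + 1) = 1 then (-1 : ℂ) else 1) := by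
    intro p _
    have h3 : (1 + 1 : ZMod 2) = 0 := by decide
    simp only [bitAt_update, ← bitAt_val x]
    by_cases hc : p = c
    · subst hc
      have : (c : ℕ) ≠ a := by omega
      rw [← hca] at h1 ⊢
      rcases zmod2_cases (bitAt x c) with e | e <;> rcases zmod2_cases (bitAt x a) with e' | e' <;>
        simp [this, h1, e, e', zSign, h3]
    · by_cases ha : p = a
      · subst ha
        simp [h2, hc]
      · have : p + 1 ≠ a := by omega
        simp [hc, ha, this]
  rw [Finset.prod_congr rfl key, Finset.prod_mul_distrib, Finset.prod_ite_eq',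
    if_pos (Finset.mem_range.2 c.2)]

/-- A CZ layer not touching `b` does not depend on the bit at `b`. -/
lemma czSign_update {N : ℕ} (P : ℕ → Prop) [DecidablePred P] (x : QState N) (b : Fin N)
    (s : ZMod 2) (h1 : ¬ P b) (h2 : ¬ P (b + 1)) :
    czSign P (Function.update x b s) = czSign P x := by
  unfold czSign
  refine Finset.prod_congr rfl fun p _ => ?_
  simp only [bitAt_update]
  by_cases hp : p = b
  · subst hp; simp [h2]
  · by_cases hp' : p + 1 = b
    · rw [hp']; simp [h1]
    · simp [hp, hp']

/-- Adjoining the single factor `CZ_{a,b}` to a layer. -/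
lemma czSign_insert {N : ℕ} (P Q : ℕ → Prop) [DecidablePred P] [DecidablePred Q] (y : QState N)
    (a b : Fin N) (hab : (b : ℕ) = a + 1) (hP : ∀ p, P p ↔ Q p ∨ p = b) (hQ : ¬ Q b) :
    czSign P y = (if y a = 1 ∧ y b = 1 then -1 else 1) * czSign Q y := by
  unfold czSign
  have key : ∀ p ∈ Finset.range N,
      (if P (p + 1) ∧ bitAt y p = 1 ∧ bitAt y (p + 1) = 1 then (-1 : ℂ) else 1) =
      (if p = (a : ℕ) then (if y a = 1 ∧ y b = 1 then -1 else 1) else 1) *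
        (if Q (p + 1) ∧ bitAt y p = 1 ∧ bitAt y (p + 1) = 1 then (-1 : ℂ) else 1) := by
    intro p _
    by_cases ha : p = a
    · subst ha
      rw [← hab]
      simp [hP, hQ, bitAt_val]
    · have : p + 1 ≠ b := by omega
      simp [hP, ha, this]
  rw [Finset.prod_congr rfl key, Finset.prod_mul_distrib, Finset.prod_ite_eq',
    if_pos (Finset.mem_range.2 a.2)]

/-- `X_a H_a = H_a Z_a` inside a Hadamard layer containing `a`. -/
lemma hadKer_flip {N : ℕ} (P : ℕ → Prop) [DecidablePred P] (x y : QState N) (a : Fin N)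
    (h : P (a + 1)) :
    hadOn N P (Function.update x a (x a + 1)) y = zSign (y a) * hadOn N P x y := by
  simp only [hadOn, Matrix.of_apply]
  have key : ∀ k ∈ (Finset.univ : Finset (Fin N)),
      (if P ((k : ℕ) + 1) then HM (Function.update x a (x a + 1) k) (y k)
        else if Function.update x a (x a + 1) k = y k then (1 : ℂ) else 0) =
      (if k = a then zSign (y a) else 1) *
        (if P ((k : ℕ) + 1) then HM (x k) (y k) else if x k = y k then (1 : ℂ) else 0) := by
    intro k _
    by_cases hk : k = a
    · subst hk
      have h3 : (1 + 1 : ZMod 2) = 0 := by decide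
      rcases zmod2_cases (x k) with e | e <;> rcases zmod2_cases (y k) with e' | e' <;>
        simp [h, e, e', zSign, HM, h3]
    · simp [hk]
  rw [Finset.prod_congr rfl key, Finset.prod_mul_distrib, Finset.prod_ite_eq',
    if_pos (Finset.mem_univ _)]

/-- `H_b` adjoined to a Hadamard layer not containing `b`; the factor `w` may depend on the
intermediate bit, which equals `y b`. -/
lemma hadKer_insert {N : ℕ} (P Q : ℕ → Prop) [DecidablePred P] [DecidablePred Q] (x y : QState N)
    (b : Fin N) (hP : ∀ p, P p ↔ Q p ∨ p = b + 1) (hQ : ¬ Q (b + 1)) (w : ZMod 2 → ℂ) :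
    ∑ s, HM (x b) s * (w s * hadOn N Q (Function.update x b s) y) = w (y b) * hadOn N P x y := by
  simp only [hadOn, Matrix.of_apply]
  have hs : ∀ s, ∏ k : Fin N, (if Q ((k : ℕ) + 1) then HM (Function.update x b s k) (y k)
        else if Function.update x b s k = y k then (1 : ℂ) else 0) =
      (if s = y b then 1 else 0) * ∏ k ∈ Finset.univ.erase b,
        (if Q ((k : ℕ) + 1) then HM (x k) (y k) else if x k = y k then (1 : ℂ) else 0) := by
    intro s
    rw [← Finset.mul_prod_erase _ _ (Finset.mem_univ b)]
    congr 1
    · simp [hQ]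
    · refine Finset.prod_congr rfl fun k hk => ?_
      rw [Function.update_of_ne (Finset.ne_of_mem_erase hk)]
  have hx : ∏ k : Fin N, (if P ((k : ℕ) + 1) then HM (x k) (y k)
        else if x k = y k then (1 : ℂ) else 0) =
      HM (x b) (y b) * ∏ k ∈ Finset.univ.erase b,
        (if Q ((k : ℕ) + 1) then HM (x k) (y k) else if x k = y k then (1 : ℂ) else 0) := by
    rw [← Finset.mul_prod_erase _ _ (Finset.mem_univ b)]
    congr 1
    · simp [hP]
    · refine Finset.prod_congr rfl fun k hk => ?_
      have : (k : ℕ) ≠ b := fun e => Finset.ne_of_mem_erase hk (Fin.ext e)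
      simp [hP, this]
  simp only [hs, hx]
  rw [sum_zmod2 _ (y b)]
  simp
  ring

/-! ### The recursion -/

/-- The block `L (H S H)_a L` acts on `D_{2i-1}` from the left as
`(1+i)/2 + (1-i)/2 Z_b Z_a` with `Z_a` acting from the right. -/
lemma block_Dgate_apply {N i : ℕ} (hi : 2 ≤ i) (a b c : Fin N) (ha : (a : ℕ) = 2 * i - 2)
    (hb : (b : ℕ) = 2 * i - 1) (hc : (c : ℕ) = 2 * i - 3) (x y : QState N) :
    (1 + I) / 2 * (ladderSign x * Dgate N (2 * i - 1) x y) +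
      (1 - I) / 2 * (ladderSign (Function.update x a (x a + 1)) *
        Dgate N (2 * i - 1) (Function.update x a (x a + 1)) y) =
      ladderSign x * (((1 + I) / 2 + (1 - I) / 2 * (zSign (x b) * zSign (y a))) *
        Dgate N (2 * i - 1) x y) := by
  have hL := ladderSign_mul_self x
  have hz : zSign (x c) * zSign (x c) = 1 := by
    unfold zSign; split_ifs <;> norm_num
  have hl := ladderSign_flip x a b c (by omega) (by omega)
  have hD : Dgate N (2 * i - 1) (Function.update x a (x a + 1)) y =
      zSign (x c) * zSign (y a) * Dgate N (2 * i - 1) x y := by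
    rw [Dgate_apply, Dgate_apply, hadKer_flip _ _ _ _ (by omega),
      czSign_flip _ _ a c (by omega) (by omega) (by omega)]
    ring
  -- `ladderSign x` is its own inverse, so the ladder rule determines the flipped sign.
  have hl' : ladderSign (Function.update x a (x a + 1)) =
      ladderSign x * (zSign (x c) * zSign (x b)) := by
    rw [← hl, ← mul_assoc, hL, one_mul]
  rw [hD, hl']
  linear_combination (1 - I) / 2 * ladderSign x * zSign (x b) * zSign (y a) *
    Dgate N (2 * i - 1) x y * hz

/-- `S†_a S†_b ((1+i)/2 + (1-i)/2 Z_a Z_b) = CZ_{a,b}`. -/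
lemma sdg_block_eq_cz (s t : ZMod 2) :
    (if s = 0 then 1 else -I) * ((1 + I) / 2 + (1 - I) / 2 * (zSign s * zSign t)) *
      (if t = 0 then 1 else -I) = if t = 1 ∧ s = 1 then -1 else 1 := by
  rcases zmod2_cases s with rfl | rfl <;> rcases zmod2_cases t with rfl | rfl <;>
    simp [zSign] <;> ring_nf <;> simp [I_sq]


/-- for `i ≥ 2` and `N ≥ 2i`, on `N` qubits (1-based qubit `q` ↦ index `q−1`),
`D_{2i} = e^{iφ} · H_{2i} · S†_{2i} · Ladder_CZ · H_{2i−1} · S_{2i−1} · H_{2i−1} · Ladder_CZ ·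
D_{2i−1} · S†_{2i−1}` for some real phase `φ` (rightmost factor applied first). -/
theorem D_even_recursion (i N : ℕ) (hi : 2 ≤ i) (hN : 2 * i ≤ N) :
    ∃ φ : ℝ,
      Dgate N (2 * i) =
        Complex.exp (φ * Complex.I) •
          (gate1 HM (⟨2 * i - 1, by omega⟩ : Fin N) *
            gate1 SdgM (⟨2 * i - 1, by omega⟩ : Fin N) * ladderCZ N *
            gate1 HM (⟨2 * i - 2, by omega⟩ : Fin N) *
            gate1 SM (⟨2 * i - 2, by omega⟩ : Fin N) *
            gate1 HM (⟨2 * i - 2, by omega⟩ : Fin N) * ladderCZ N *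
            Dgate N (2 * i - 1) * gate1 SdgM (⟨2 * i - 2, by omega⟩ : Fin N)) := by
  refine ⟨0, ?_⟩
  simp only [ofReal_zero, zero_mul, Complex.exp_zero, one_smul]
  set a : Fin N := ⟨2 * i - 2, by omega⟩ with ha
  set b : Fin N := ⟨2 * i - 1, by omega⟩ with hb
  obtain ⟨c, hc⟩ : ∃ c : Fin N, (c : ℕ) = 2 * i - 3 := ⟨⟨2 * i - 3, by omega⟩, rfl⟩
  have hav : (a : ℕ) = 2 * i - 2 := rfl
  have hbv : (b : ℕ) = 2 * i - 1 := rfl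
  ext x y
  rw [gate1_SdgM, gate1_SdgM, ladderCZ_eq, Matrix.mul_diagonal]
  simp only [Matrix.mul_assoc]
  rw [gate1_mul_apply]
  simp only [Matrix.diagonal_mul, HSH_mul_apply]
  simp only [block_Dgate_apply hi a b c hav hbv hc, Function.update_self]
  rw [Dgate_apply, czSign_insert _ (fun p => p % 2 = 1 ∧ p ≤ 2 * i - 1 - 1) y a b (by omega)
    (fun p => by omega) (by omega), Finset.sum_mul]
  have hterm : ∀ s, HM (x b) s * ((if s = 0 then 1 else -I) *
      (ladderSign (Function.update x b s) * (ladderSign (Function.update x b s) *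
        (((1 + I) / 2 + (1 - I) / 2 * (zSign s * zSign (y a))) *
          Dgate N (2 * i - 1) (Function.update x b s) y)))) * (if y a = 0 then 1 else -I) =
      HM (x b) s * (((if y a = 1 ∧ s = 1 then -1 else 1) *
        czSign (fun p => p % 2 = 0 ∧ 2 ≤ p ∧ p ≤ 2 * i - 1 - 1) x *
        czSign (fun p => p % 2 = 1 ∧ p ≤ 2 * i - 1 - 1) y) *
        hadOn N (fun q => 2 ≤ q ∧ q ≤ 2 * i - 1) (Function.update x b s) y) := by
    intro s
    rw [← sdg_block_eq_cz, Dgate_apply,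
      czSign_update (fun p => p % 2 = 0 ∧ 2 ≤ p ∧ p ≤ 2 * i - 1 - 1) x b s (by omega) (by omega)]
    linear_combination HM (x b) s * (if s = 0 then 1 else -I) *
      ((1 + I) / 2 + (1 - I) / 2 * (zSign s * zSign (y a))) *
      czSign (fun p => p % 2 = 0 ∧ 2 ≤ p ∧ p ≤ 2 * i - 1 - 1) x *
      hadOn N (fun q => 2 ≤ q ∧ q ≤ 2 * i - 1) (Function.update x b s) y *
      czSign (fun p => p % 2 = 1 ∧ p ≤ 2 * i - 1 - 1) y *
      (if y a = 0 then 1 else -I) * ladderSign_mul_self (Function.update x b s)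
  simp only [hterm]
  rw [hadKer_insert (fun q => 2 ≤ q ∧ q ≤ 2 * i) (fun q => 2 ≤ q ∧ q ≤ 2 * i - 1) x y b
    (fun p => by omega) (by omega) (fun s => (if y a = 1 ∧ s = 1 then -1 else 1) *
        czSign (fun p => p % 2 = 0 ∧ 2 ≤ p ∧ p ≤ 2 * i - 1 - 1) x *
        czSign (fun p => p % 2 = 1 ∧ p ≤ 2 * i - 1 - 1) y)]
  -- `2i - 1` is odd, so both even layers consist of the same gates.
  have hE : czSign (fun p => p % 2 = 0 ∧ 2 ≤ p ∧ p ≤ 2 * i - 1) x =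
      czSign (fun p => p % 2 = 0 ∧ 2 ≤ p ∧ p ≤ 2 * i - 1 - 1) x := by
    unfold czSign
    refine Finset.prod_congr rfl fun p _ => if_congr (and_congr_left' (by omega)) rfl rfl
  rw [hE]
  ring
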